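/- arXiv:2507.21658 — 2 statements merged into one kernel-verified Lean document; each statement's English description precedes it below -/
import Mathlib

section
/- Let n > 1 be a square-free integer and let a_{n,r,t} be the automorphism of D_{2n} determined by integers r, t with gcd(r, n) = 1. Then c(V_n, a_{n,r,t}) = Σ (d/κ(n,r,t)) · φ( |r|_n / (ℓ · gcd(κ(d,r,t), |r|_n)) ), where the sum ranges over all pairs (d, ℓ) with d a divisor of n, ℓ a divisor of |r|_n / gcd(κ(d,r,t), |r|_n), and gcd(r^{ℓ·κ(d,r,t)} − 1, n) = d, and φ is Euler's totient function. -/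
/-- The cycle number of a map `f` on a subset `s`: the number of equivalence classes of
points of `s` under the equivalence relation generated by `x ↦ f x`, i.e. the number of
orbits (cycles) of `f` meeting `s` when `s` is `f`-invariant. -/
noncomputable def cycleCount {Ω : Type*} (f : Ω → Ω) (s : Set Ω) : ℕ :=
  Nat.card (Quot fun a b : s => f (a : Ω) = (b : Ω))

/-- `|r|_m`: the multiplicative order of the integer `r` modulo `m`. -/
noncomputable def ordMod (m : ℕ) (r : ℤ) : ℕ := orderOf ((r : ZMod m))

/-- The map `a_{n,r,t}` on the dihedral group `D_{2n}`, sending `u^i ↦ u^{ri}` and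
`u^j v ↦ u^{rj+t} v`. (In Mathlib's `DihedralGroup`, with `u := r 1` and `v := sr 0`, one has
`u^j * v = sr (-j)`, so this map is `r i ↦ r (r·i)`, `sr j ↦ sr (r·j - t)`.) -/
def dihedralAut (n : ℕ) (r t : ℤ) : DihedralGroup n → DihedralGroup n
  | DihedralGroup.r i => DihedralGroup.r ((r : ZMod n) * i)
  | DihedralGroup.sr j => DihedralGroup.sr ((r : ZMod n) * j - (t : ZMod n))

/-- `U_n(d)`: the set of elements of order `d` in the cyclic subgroup `⟨u⟩` of `D_{2n}`. -/
def UnD (n d : ℕ) : Set (DihedralGroup n) :=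
  {x | (∃ i, x = DihedralGroup.r i) ∧ orderOf x = d}

/-- `U_n`: the set of nonidentity elements of the cyclic subgroup `⟨u⟩` of `D_{2n}`. -/
def Un (n : ℕ) : Set (DihedralGroup n) :=
  {x | (∃ i, x = DihedralGroup.r i) ∧ x ≠ 1}

/-- `V_n := {u^j v : 0 ≤ j ≤ n-1}`, the set of reflections of `D_{2n}`. -/
def Vn (n : ℕ) : Set (DihedralGroup n) :=
  {x | ∃ j, x = DihedralGroup.sr j}

/-- `S_m(x) := 1 + x + ⋯ + x^{m-1}`, with `S_0(x) := 0`. -/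
def Spoly (m : ℕ) (r : ℤ) : ℤ := ∑ i ∈ Finset.range m, r ^ i

/-- `κ(n,r,t) := n·|r|_n / gcd(n, t·S_{|r|_n}(r))`. -/
noncomputable def kappa (n : ℕ) (r t : ℤ) : ℕ :=
  n * ordMod n r / Int.gcd (n : ℤ) (t * Spoly (ordMod n r) r)

open Finset in
lemma aux_count (n : ℕ) [NeZero n] (c b : ℤ) :
    Nat.card {x : ZMod n // (c : ZMod n) * x = (b : ZMod n)} =
      if ((Int.gcd c n : ℕ) : ℤ) ∣ b then Int.gcd c n else 0 := by
  split_ifs with h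
  · obtain ⟨x0, hx0⟩ : ∃ x0 : ZMod n, (c : ZMod n) * x0 = (b : ZMod n) := by
      obtain ⟨q, rfl⟩ := h
      refine ⟨((Int.gcdA c n * q : ℤ) : ZMod n), ?_⟩
      rw [Int.gcd_eq_gcd_ab]
      push_cast
      simp
      ring
    have e : {x : ZMod n // (c : ZMod n) * x = (b : ZMod n)} ≃
        (nsmulAddMonoidHom (c : ZMod n).val : ZMod n →+ ZMod n).ker :=
      { toFun := fun x => ⟨x.1 - x0, by
          rw [AddMonoidHom.mem_ker]
          simp [nsmulAddMonoidHom, mul_sub, x.2, hx0]⟩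
        invFun := fun x => ⟨x.1 + x0, by
          have := x.2
          rw [AddMonoidHom.mem_ker] at this
          simp [nsmulAddMonoidHom] at this
          rw [mul_add, this, hx0, zero_add]⟩
        left_inv := fun x => by simp
        right_inv := fun x => by simp }
    rw [Nat.card_congr e, IsAddCyclic.card_nsmulAddMonoidHom_ker, Nat.card_zmod]
    have h1 : ((n.gcd (c : ZMod n).val : ℕ)) = Int.gcd ((c : ZMod n).val : ℤ) n := by
      rw [Int.gcd_natCast_natCast, Nat.gcd_comm]
    rw [h1, ZMod.val_intCast, Int.emod_def]
    simp
  · have : IsEmpty {x : ZMod n // (c : ZMod n) * x = (b : ZMod n)} := by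
      refine ⟨fun x => h ?_⟩
      obtain ⟨x, hx⟩ := x
      obtain ⟨z, rfl⟩ := ZMod.intCast_surjective x
      have h2 : ((c * z - b : ℤ) : ZMod n) = 0 := by push_cast; rw [hx, sub_self]
      rw [ZMod.intCast_zmod_eq_zero_iff_dvd] at h2
      have h3 := (Int.gcd_dvd_right c n).trans h2
      have h4 : ((Int.gcd c n : ℕ) : ℤ) ∣ c * z := (Int.gcd_dvd_left c n).mul_right z
      exact (dvd_sub_right h4).1 h3
    simp

lemma Spoly_mul (o m : ℕ) (r : ℤ) :
    Spoly (o * m) r = Spoly o r * ∑ i ∈ Finset.range m, (r ^ o) ^ i := by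
  induction m with
  | zero => simp [Spoly]
  | succ m ih =>
    rw [Finset.sum_range_succ, mul_add (Spoly o r), ← ih, Nat.mul_succ, Spoly, Finset.sum_range_add]
    simp only [Spoly, Finset.sum_mul]
    congr 1
    refine Finset.sum_congr rfl fun i _ => ?_
    rw [pow_add, pow_mul, mul_comm]

lemma ordMod_dvd (d : ℕ) (r : ℤ) (k : ℕ) : ordMod d r ∣ k ↔ (d : ℤ) ∣ r ^ k - 1 := by
  rw [ordMod, orderOf_dvd_iff_pow_eq_one, ← ZMod.intCast_zmod_eq_zero_iff_dvd]
  push_cast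
  rw [sub_eq_zero]

lemma kappa_dvd (d : ℕ) (hd : 0 < d) (r t : ℤ) (ho : 0 < ordMod d r) (k : ℕ) :
    kappa d r t ∣ k ↔ (d : ℤ) ∣ r ^ k - 1 ∧ (d : ℤ) ∣ t * Spoly k r := by
  rw [← ordMod_dvd]
  set o := ordMod d r with hoo
  have hro : (d : ℤ) ∣ r ^ o - 1 := (ordMod_dvd d r o).1 dvd_rfl
  set g := Int.gcd (d : ℤ) (t * Spoly o r) with hg
  have hgd : g ∣ d := by exact_mod_cast Int.gcd_dvd_left (d : ℤ) (t * Spoly o r)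
  have hk : kappa d r t = o * (d / g) := by
    rw [kappa, ← hoo, ← hg, mul_comm, Nat.mul_div_assoc _ hgd]
  rw [hk]
  constructor
  · rintro ⟨q, rfl⟩
    refine ⟨⟨d / g * q, by ring⟩, ?_⟩
    rw [mul_assoc, Spoly_mul, ← mul_assoc]
    have hs : (d : ℤ) ∣ (∑ i ∈ Finset.range (d / g * q), (r ^ o) ^ i) - ((d / g * q : ℕ) : ℤ) := by
      have : ((d / g * q : ℕ) : ℤ) = ∑ i ∈ Finset.range (d / g * q), 1 := by simp
      rw [this, ← Finset.sum_sub_distrib]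
      exact Finset.dvd_sum fun i _ => hro.trans (by simpa using sub_dvd_pow_sub_pow (r ^ o) 1 i)
    have h2 : (d : ℤ) ∣ t * Spoly o r * ((d / g * q : ℕ) : ℤ) := by
      obtain ⟨y, hy⟩ : (g : ℤ) ∣ t * Spoly o r := Int.gcd_dvd_right _ _
      rw [hy]
      refine ⟨y * q, ?_⟩
      have : (d : ℤ) = g * ((d / g : ℕ) : ℤ) := by
        exact_mod_cast (Nat.mul_div_cancel' hgd).symm
      conv_rhs => rw [this]
      push_cast
      ring
    have := dvd_add h2 (hs.mul_left (t * Spoly o r))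
    rwa [← mul_add, add_sub_cancel] at this
  · rintro ⟨⟨m, rfl⟩, h⟩
    apply Nat.mul_dvd_mul_left
    rw [Spoly_mul, ← mul_assoc] at h
    have hs : (d : ℤ) ∣ (∑ i ∈ Finset.range m, (r ^ o) ^ i) - (m : ℤ) := by
      have : (m : ℤ) = ∑ i ∈ Finset.range m, 1 := by simp
      conv_rhs => rw [this]
      rw [← Finset.sum_sub_distrib]
      exact Finset.dvd_sum fun i _ => hro.trans (by simpa using sub_dvd_pow_sub_pow (r ^ o) 1 i)
    have h3 : (d : ℤ) ∣ t * Spoly o r * m := by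
      have := dvd_sub h (hs.mul_left (t * Spoly o r))
      rwa [← mul_sub, sub_sub_cancel] at this
    have h4 : d ∣ g * m := by
      have := Int.dvd_gcd (dvd_mul_right (d : ℤ) m) h3
      rw [Int.gcd_mul_right, ← hg] at this
      simpa using this
    exact (Nat.div_dvd_iff_dvd_mul hgd (Nat.pos_of_dvd_of_pos hgd hd)).2 h4

lemma ordMod_pos (d : ℕ) (hd : 0 < d) (r : ℤ) (hr : Int.gcd r d = 1) : 0 < ordMod d r := by
  have : NeZero d := ⟨hd.ne'⟩
  have hu : IsUnit (r : ZMod d) := by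
    rw [ZMod.coe_int_isUnit_iff_isCoprime]
    exact (Int.isCoprime_iff_gcd_eq_one.2 hr).symm
  obtain ⟨u, hu⟩ := hu
  rw [ordMod, ← hu, orderOf_units]
  exact orderOf_pos u

lemma kappa_pos (d : ℕ) (hd : 0 < d) (r t : ℤ) (ho : 0 < ordMod d r) : 0 < kappa d r t := by
  rw [kappa]
  apply Nat.div_pos
  · exact (Nat.le_of_dvd hd (by exact_mod_cast Int.gcd_dvd_left (d : ℤ) _)).trans
      (Nat.le_mul_of_pos_right _ ho)
  · exact Int.gcd_pos_of_ne_zero_left _ (by exact_mod_cast hd.ne')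

lemma burnside_perm {α : Type} [Fintype α] [DecidableEq α] (a : Equiv.Perm α) :
    Nat.card (Quot fun x y : α => a x = y) * orderOf a =
      ∑ k ∈ Finset.range (orderOf a), Nat.card {x // (a ^ k) x = x} := by
  classical
  have h := MulAction.sum_card_fixedBy_eq_card_orbits_mul_card_group (Subgroup.zpowers a) α
  rw [Fintype.card_zpowers] at h
  have e : (Quot fun x y : α => a x = y) ≃
      Quotient (MulAction.orbitRel (Subgroup.zpowers a) α) := by
    refine Equiv.ofBijective (Quot.lift (fun x => Quotient.mk _ x) ?_) ⟨?_, ?_⟩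
    · rintro x y rfl
      apply Quotient.sound
      show MulAction.orbitRel _ _ _ _
      rw [MulAction.orbitRel_apply]
      refine ⟨⟨a⁻¹, by simp⟩, ?_⟩
      simp [Subgroup.smul_def]
    · intro x y
      induction x using Quot.ind with | _ x => ?_
      induction y using Quot.ind with | _ y => ?_
      intro hxy
      have hxy := Quotient.exact hxy
      change MulAction.orbitRel _ _ _ _ at hxy
      rw [MulAction.orbitRel_apply] at hxy
      obtain ⟨⟨g, hg⟩, rfl⟩ := hxy
      rw [mem_zpowers_iff_mem_range_orderOf] at hg
      simp only [Finset.mem_image] at hg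
      obtain ⟨k, -, rfl⟩ := hg
      symm
      show Quot.mk _ y = Quot.mk _ ((a ^ k) y)
      clear hxy hg
      induction k with
      | zero => simp
      | succ k ih =>
        rw [ih]
        apply Quot.sound
        rw [pow_succ', Equiv.Perm.mul_apply]
    · intro y
      induction y using Quotient.ind with | _ y => ?_
      exact ⟨Quot.mk _ y, rfl⟩
  rw [Nat.card_congr e, Nat.card_eq_fintype_card, ← h, Finset.sum_range]
  symm
  refine Fintype.sum_equiv (finEquivZPowers (isOfFinOrder_of_finite a)) _ _ fun k => ?_
  rw [← Nat.card_eq_fintype_card]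
  rfl

/-- The affine permutation `x ↦ r x - t` of `ZMod n`. -/
def affPerm (n : ℕ) (u : (ZMod n)ˣ) (t : ZMod n) : Equiv.Perm (ZMod n) where
  toFun x := u * x - t
  invFun x := (u⁻¹ : (ZMod n)ˣ) * (x + t)
  left_inv x := by simp
  right_inv x := by simp

lemma affPerm_pow (n : ℕ) (u : (ZMod n)ˣ) (r t : ℤ) (hu : (u : ZMod n) = r) (k : ℕ)
    (x : ZMod n) :
    (affPerm n u t ^ k) x = ((r ^ k : ℤ) : ZMod n) * x - ((t * Spoly k r : ℤ) : ZMod n) := by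
  induction k generalizing x with
  | zero => simp [Spoly]
  | succ k ih =>
    rw [pow_succ, Equiv.Perm.mul_apply, ih]
    simp only [affPerm, Equiv.coe_fn_mk, Spoly, Finset.sum_range_succ, hu]
    push_cast
    ring

lemma cycleCount_eq (n : ℕ) (u : (ZMod n)ˣ) (r t : ℤ) (hu : (u : ZMod n) = r) :
    cycleCount (dihedralAut n r t) (Vn n) =
      Nat.card (Quot fun x y : ZMod n => affPerm n u t x = y) := by
  rw [cycleCount]
  refine (Nat.card_congr (Quot.congr
    (Equiv.ofBijective (fun j : ZMod n => (⟨DihedralGroup.sr j, j, rfl⟩ : Vn n)) ⟨?_, ?_⟩)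
      ?_)).symm
  · intro i j h
    exact DihedralGroup.sr.inj (congrArg Subtype.val h)
  · rintro ⟨_, j, rfl⟩
    exact ⟨j, rfl⟩
  · intro i j
    show (u : ZMod n) * i - t = j ↔
      DihedralGroup.sr ((r : ZMod n) * i - (t : ZMod n)) = DihedralGroup.sr j
    rw [hu, DihedralGroup.sr.injEq]

lemma orderOf_affPerm (n : ℕ) (hn : 0 < n) (u : (ZMod n)ˣ) (r t : ℤ) (hu : (u : ZMod n) = r)
    (ho : 0 < ordMod n r) : orderOf (affPerm n u t) = kappa n r t := by
  refine Nat.dvd_right_iff_eq.1 fun k => ?_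
  rw [orderOf_dvd_iff_pow_eq_one, kappa_dvd n hn r t ho, ← ZMod.intCast_zmod_eq_zero_iff_dvd,
    ← ZMod.intCast_zmod_eq_zero_iff_dvd, Equiv.ext_iff]
  simp only [affPerm_pow n u r t hu, Equiv.Perm.one_apply]
  constructor
  · intro h
    have h0 : ((t * Spoly k r : ℤ) : ZMod n) = 0 := by simpa using h 0
    refine ⟨?_, h0⟩
    have h1 := h 1
    rw [h0] at h1
    push_cast at h1 ⊢
    rw [sub_eq_zero]
    simpa using h1
  · rintro ⟨h1, h0⟩ x
    rw [h0]
    push_cast at h1 ⊢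
    rw [sub_eq_zero] at h1
    rw [h1]
    simp

lemma fix_count (n : ℕ) (hn : 0 < n) (u : (ZMod n)ˣ) (r t : ℤ) (hu : (u : ZMod n) = r)
    (hr : Int.gcd r n = 1) (k : ℕ) :
    Nat.card {x // (affPerm n u t ^ k) x = x} =
      ∑ d ∈ Nat.divisors n,
        if Int.gcd (r ^ k - 1) n = d ∧ kappa d r t ∣ k then d else 0 := by
  have : NeZero n := ⟨hn.ne'⟩
  set g := Int.gcd (r ^ k - 1) n with hg
  have hgn : g ∣ n := by exact_mod_cast Int.gcd_dvd_right (r ^ k - 1) (n : ℤ)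
  have hg0 : 0 < g := Nat.pos_of_dvd_of_pos hgn hn
  have hrg : Int.gcd r g = 1 := by
    rw [← Int.isCoprime_iff_gcd_eq_one] at hr ⊢
    exact hr.of_isCoprime_of_dvd_right (by exact_mod_cast hgn)
  have e : {x // (affPerm n u t ^ k) x = x} ≃
      {x : ZMod n // ((r ^ k - 1 : ℤ) : ZMod n) * x = ((t * Spoly k r : ℤ) : ZMod n)} := by
    refine Equiv.subtypeEquivRight fun x => ?_
    rw [affPerm_pow n u r t hu, sub_eq_iff_eq_add, Int.cast_sub, sub_mul, sub_eq_iff_eq_add]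
    simp [add_comm]
  rw [Nat.card_congr e, aux_count, ← hg, Finset.sum_eq_single g]
  · simp only [true_and]
    refine if_congr ?_ rfl rfl
    rw [kappa_dvd g hg0 r t (ordMod_pos g hg0 r hrg)]
    exact (and_iff_right (Int.gcd_dvd_left _ _)).symm
  · intro d _ hd
    rw [if_neg]
    exact fun h => hd h.1.symm
  · intro h
    exact absurd (Nat.mem_divisors.2 ⟨hgn, hn.ne'⟩) h

lemma kappa_eq_mul (n d : ℕ) (hn : 0 < n) (hsf : Squarefree n) (hd : d ∣ n) (r t : ℤ)
    (hon : 0 < ordMod n r) (hod : 0 < ordMod d r)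
    (hc : Int.gcd ((n / d : ℕ) : ℤ) (r - 1) = 1) :
    kappa n r t = Nat.lcm (kappa d r t) (ordMod n r) := by
  have hd0 := Nat.pos_of_dvd_of_pos hd hn
  obtain ⟨e, rfl⟩ := hd
  rw [Nat.mul_div_cancel_left _ hd0] at hc
  refine Nat.dvd_right_iff_eq.1 fun k => ?_
  rw [Nat.lcm_dvd_iff, kappa_dvd _ hn r t hon, kappa_dvd _ hd0 r t hod, ordMod_dvd]
  have hde : ((d * e : ℕ) : ℤ) = d * e := by push_cast; rfl
  constructor
  · rintro ⟨h1, h2⟩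
    rw [hde] at h1 h2
    exact ⟨⟨(dvd_mul_right _ _).trans h1, (dvd_mul_right _ _).trans h2⟩, by rwa [hde]⟩
  · rintro ⟨⟨h1, h2⟩, h3⟩
    refine ⟨h3, ?_⟩
    rw [hde] at h3 ⊢
    have hcop : IsCoprime (d : ℤ) e := Nat.isCoprime_iff_coprime.2 (Nat.coprime_of_squarefree_mul hsf)
    refine hcop.mul_dvd h2 (Dvd.dvd.mul_left ?_ t)
    have h4 := (dvd_mul_left (e : ℤ) d).trans h3
    rw [← geom_sum_mul] at h4
    exact (Int.isCoprime_iff_gcd_eq_one.2 hc).dvd_of_dvd_mul_right h4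

lemma sum_gcd_totient (M : ℕ) (hM : 0 < M) (P : ℕ → Prop) [DecidablePred P]
    (hP : ∀ j, P j ↔ P (M.gcd j)) :
    ((Finset.range M).filter P).card =
      ∑ l ∈ M.divisors, if P l then Nat.totient (M / l) else 0 := by
  rw [Finset.card_eq_sum_card_fiberwise (f := fun j => M.gcd j) (t := M.divisors)]
  · refine Finset.sum_congr rfl fun l hl => ?_
    rw [Nat.totient_div_of_dvd (Nat.dvd_of_mem_divisors hl), Finset.filter_filter]
    split_ifs with h
    · congr 1
      refine Finset.filter_congr fun j _ => ⟨fun h => h.2, fun h' => ⟨?_, h'⟩⟩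
      rw [hP, h']; exact h
    · rw [Finset.card_eq_zero, Finset.filter_eq_empty_iff]
      rintro j _ ⟨h1, h2⟩
      rw [hP, h2] at h1
      exact h h1
  · intro j _
    simpa [hM.ne'] using Nat.gcd_dvd_left M j

lemma gcd_pow_sub_one (n : ℕ) (r : ℤ) (M K j : ℕ) (h : ordMod n r ∣ K * M) :
    Int.gcd (r ^ (K * j) - 1) n = Int.gcd (r ^ (K * M.gcd j) - 1) n := by
  have hn' : (n : ℤ) ∣ r ^ (K * M) - 1 := (ordMod_dvd n r _).1 h
  have key : ∀ e : ℕ, e ∣ n → ((e : ℤ) ∣ r ^ (K * j) - 1 ↔ (e : ℤ) ∣ r ^ (K * M.gcd j) - 1) := by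
    intro e he
    have h1 : ordMod e r ∣ K * M :=
      (ordMod_dvd e r _).2 ((Int.natCast_dvd_natCast.2 he).trans hn')
    rw [← ordMod_dvd, ← ordMod_dvd, ← Nat.gcd_mul_left, Nat.dvd_gcd_iff]
    exact (and_iff_right h1).symm
  have h1 : ∀ c : ℤ, Int.gcd c n ∣ n := fun c => by exact_mod_cast Int.gcd_dvd_right c (n : ℤ)
  apply Nat.dvd_antisymm
  · exact Int.natCast_dvd_natCast.1 (Int.dvd_coe_gcd ((key _ (h1 _)).1 (Int.gcd_dvd_left _ _))
      (Int.gcd_dvd_right _ _))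
  · exact Int.natCast_dvd_natCast.1 (Int.dvd_coe_gcd ((key _ (h1 _)).2 (Int.gcd_dvd_left _ _))
      (Int.gcd_dvd_right _ _))

lemma count_d (n d : ℕ) (hn : 0 < n) (hsf : Squarefree n) (hd : d ∣ n) (r t : ℤ)
    (hr : Int.gcd r n = 1) :
    ((Finset.range (kappa n r t)).filter
      (fun k => Int.gcd (r ^ k - 1) n = d ∧ kappa d r t ∣ k)).card =
    ∑ ℓ ∈ Nat.divisors (ordMod n r / Nat.gcd (kappa d r t) (ordMod n r)),
      if Int.gcd (r ^ (ℓ * kappa d r t) - 1) (n : ℤ) = d then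
        Nat.totient (ordMod n r / (ℓ * Nat.gcd (kappa d r t) (ordMod n r))) else 0 := by
  have hd0 := Nat.pos_of_dvd_of_pos hd hn
  have hon := ordMod_pos n hn r hr
  have hod : 0 < ordMod d r := by
    apply ordMod_pos d hd0
    rw [← Int.isCoprime_iff_gcd_eq_one] at hr ⊢
    exact hr.of_isCoprime_of_dvd_right (by exact_mod_cast hd)
  have hK := kappa_pos d hd0 r t hod
  set K := kappa d r t with hKdef
  set o := ordMod n r with hodef
  by_cases hc : Int.gcd ((n / d : ℕ) : ℤ) (r - 1) = 1
  · have hkn : kappa n r t = K * (o / K.gcd o) := by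
      rw [kappa_eq_mul n d hn hsf hd r t hon hod hc, Nat.lcm, Nat.mul_div_assoc]
      exact Nat.gcd_dvd_right _ _
    have hM : 0 < o / K.gcd o :=
      Nat.div_pos (Nat.le_of_dvd hon (Nat.gcd_dvd_right _ _)) (Nat.gcd_pos_of_pos_left _ hK)
    have hoM : o ∣ K * (o / K.gcd o) := by
      rw [← Nat.mul_div_assoc _ (Nat.gcd_dvd_right _ _)]
      exact Nat.dvd_lcm_right K o
    rw [hkn]
    set M := o / K.gcd o with hMdef
    have := sum_gcd_totient M hM (fun j => Int.gcd (r ^ (K * j) - 1) n = d) (fun j => by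
      rw [gcd_pow_sub_one n r M K j hoM])
    have e1 : ∀ l, o / (l * K.gcd o) = M / l := fun l => by
      rw [hMdef, Nat.div_div_eq_div_mul, mul_comm]
    simp only [e1, mul_comm _ K]
    rw [← this]
    symm
    refine Finset.card_bij (fun j _ => K * j) ?_ ?_ ?_
    · intro j hj
      simp only [Finset.mem_filter, Finset.mem_range] at hj ⊢
      exact ⟨Nat.mul_lt_mul_of_pos_left hj.1 hK, hj.2, dvd_mul_right _ _⟩
    · intro i _ j _ h
      exact Nat.eq_of_mul_eq_mul_left hK h
    · intro k hk
      simp only [Finset.mem_filter, Finset.mem_range] at hk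
      obtain ⟨h1, h2, j, rfl⟩ := hk
      refine ⟨j, ?_, rfl⟩
      simp only [Finset.mem_filter, Finset.mem_range]
      exact ⟨Nat.lt_of_mul_lt_mul_left h1, h2⟩
  · have hne : ∀ k, Int.gcd (r ^ k - 1) n ≠ d := by
      intro k hk
      apply hc
      set q := Int.gcd ((n / d : ℕ) : ℤ) (r - 1) with hq
      have hq1 : q ∣ n / d := by exact_mod_cast Int.gcd_dvd_left ((n / d : ℕ) : ℤ) (r - 1)
      have hq2 : (q : ℤ) ∣ r ^ k - 1 :=
        (Int.gcd_dvd_right ((n / d : ℕ) : ℤ) (r - 1)).trans (sub_one_dvd_pow_sub_one r k)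
      have hq3 : q ∣ d := by
        rw [← hk]
        exact Int.natCast_dvd_natCast.1 (Int.dvd_coe_gcd hq2
          (Int.natCast_dvd_natCast.2 (hq1.trans (Nat.div_dvd_of_dvd hd))))
      have := hsf q (by
        rw [← Nat.mul_div_cancel' hd]
        exact mul_dvd_mul hq3 hq1)
      exact Nat.isUnit_iff.1 this
    simp [hne]

/-- Let `n > 1` be square-free and let `a_{n,r,t}` be the automorphism of
`D_{2n}` determined by integers `r, t` with `gcd(r,n)=1`. Then
`c(V_n, a_{n,r,t}) = Σ (d/κ(n,r,t)) · φ(|r|_n / (ℓ·gcd(κ(d,r,t),|r|_n)))`, the sum ranging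
over pairs `(d,ℓ)` with `d ∣ n`, `ℓ ∣ |r|_n / gcd(κ(d,r,t),|r|_n)` and
`gcd(r^{ℓκ(d,r,t)} - 1, n) = d`. -/
theorem cycleCount_Vn_of_squarefree (n : ℕ) (hn : 1 < n) (hsf : Squarefree n) (r t : ℤ)
    (hr : Int.gcd r (n : ℤ) = 1) :
    (cycleCount (dihedralAut n r t) (Vn n) : ℚ)
      = ∑ d ∈ Nat.divisors n,
          ∑ ℓ ∈ Nat.divisors (ordMod n r / Nat.gcd (kappa d r t) (ordMod n r)),
            if Int.gcd (r ^ (ℓ * kappa d r t) - 1) (n : ℤ) = d then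
              (d : ℚ) / (kappa n r t : ℚ) *
                (Nat.totient (ordMod n r / (ℓ * Nat.gcd (kappa d r t) (ordMod n r))) : ℚ)
            else 0 := by
  have hn0 : 0 < n := by omega
  have : NeZero n := ⟨hn0.ne'⟩
  have ho := ordMod_pos n hn0 r hr
  have hk := kappa_pos n hn0 r t ho
  have hu : IsUnit (r : ZMod n) := by
    rw [ZMod.coe_int_isUnit_iff_isCoprime]
    exact (Int.isCoprime_iff_gcd_eq_one.2 hr).symm
  obtain ⟨u, hu⟩ := hu
  have hb := burnside_perm (affPerm n u t)
  rw [← cycleCount_eq n u r t hu, orderOf_affPerm n hn0 u r t hu ho,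
    Finset.sum_congr rfl (fun k _ => fix_count n hn0 u r t hu hr k), Finset.sum_comm] at hb
  have hb2 : cycleCount (dihedralAut n r t) (Vn n) * kappa n r t =
      ∑ d ∈ Nat.divisors n, d *
        ∑ ℓ ∈ Nat.divisors (ordMod n r / Nat.gcd (kappa d r t) (ordMod n r)),
          if Int.gcd (r ^ (ℓ * kappa d r t) - 1) (n : ℤ) = d then
            Nat.totient (ordMod n r / (ℓ * Nat.gcd (kappa d r t) (ordMod n r))) else 0 := by
    rw [hb]
    refine Finset.sum_congr rfl fun d hd => ?_
    rw [← count_d n d hn0 hsf (Nat.dvd_of_mem_divisors hd) r t hr, ← Finset.sum_filter,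
      Finset.sum_const, smul_eq_mul, mul_comm]
  have hkq : (kappa n r t : ℚ) ≠ 0 := by exact_mod_cast hk.ne'
  have hb3 := congrArg (Nat.cast : ℕ → ℚ) hb2
  rw [Nat.cast_mul] at hb3
  rw [eq_div_of_mul_eq hkq hb3, Nat.cast_sum,
    Finset.sum_div]
  refine Finset.sum_congr rfl fun d _ => ?_
  rw [Nat.cast_mul, Nat.cast_sum, mul_div_right_comm, Finset.mul_sum]
  refine Finset.sum_congr rfl fun l _ => ?_
  split_ifs <;> simp
end

section
/- Assume the dihedral group D_{2n} is a DCI-group with n > 2. Then the number of isomorphism classes of Cayley digraphs on D_{2n} equals (1/(n·φ(n))) · Σ_{t | n, t > 0} φ(n/t) · Σ_{1 ≤ r ≤ n−1, gcd(r,n)=1} 2^{c(U_n, a_{n,r,0}) + c(V_n, a_{n,r,t})}, where φ is Euler's totient function. -/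
/-- The Cayley digraphs `Cay(R,S)` and `Cay(R,T)` are isomorphic: there is a bijection of `R`
carrying the arc set `{(x,y) : y x⁻¹ ∈ S}` of `Cay(R,S)` onto the arc set of `Cay(R,T)`. -/
def cayleyIso {R : Type*} [Group R] (S T : Set R) : Prop :=
  ∃ e : R ≃ R, ∀ x y : R, y * x⁻¹ ∈ S ↔ e y * (e x)⁻¹ ∈ T

/-- `R` is a DCI-group: whenever `Cay(R,S)` and `Cay(R,T)` are isomorphic for
`S, T ⊆ R \ {1}`, there is a group automorphism `a` of `R` with `T = a(S)`. -/
def IsDCI (R : Type*) [Group R] : Prop :=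
  ∀ S T : Set R, (1 : R) ∉ S → (1 : R) ∉ T → cayleyIso S T → ∃ a : MulAut R, T = ⇑a '' S


/-- `dihedralAut` with parameters in `ZMod n`. -/
def dz (n : ℕ) (r t : ZMod n) : DihedralGroup n → DihedralGroup n
  | DihedralGroup.r i => DihedralGroup.r (r * i)
  | DihedralGroup.sr j => DihedralGroup.sr (r * j - t)

lemma dihedralAut_eq_dz (n : ℕ) (r t : ℤ) :
    dihedralAut n r t = dz n (r : ZMod n) (t : ZMod n) := by
  funext x
  cases x <;> rfl

/-- The automorphism given by a unit and a translation. -/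
def dzAut (n : ℕ) (p : (ZMod n)ˣ × ZMod n) : MulAut (DihedralGroup n) where
  toFun := dz n p.1 p.2
  invFun := dz n (p.1⁻¹ : (ZMod n)ˣ) (-((p.1⁻¹ : (ZMod n)ˣ) : ZMod n) * p.2)
  left_inv := by
    rintro (i | i)
    · simp [dz]
    · simp [dz, mul_sub]
  right_inv := by
    rintro (i | i)
    · simp [dz]
    · simp [dz, mul_add]
  map_mul' := by
    rintro (i | i) (j | j)
    · simp [dz, mul_add]
    · simp [dz, mul_sub]; ring
    · simp [dz, mul_add]; ring
    · simp [dz, mul_sub]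

lemma mulAut_r (n : ℕ) (hn : 2 < n) (a : MulAut (DihedralGroup n)) :
    ∃ k : ZMod n, ∀ i : ZMod n, a (DihedralGroup.r i) = DihedralGroup.r (k * i) := by
  have : NeZero n := ⟨by omega⟩
  have h1 : orderOf (a (DihedralGroup.r 1)) = n := by
    have := orderOf_injective (a.toMonoidHom) a.injective (DihedralGroup.r 1)
    rw [DihedralGroup.orderOf_r_one] at this
    exact this
  rcases hk : a (DihedralGroup.r 1) with k | k
  · refine ⟨k, fun i => ?_⟩
    have : (DihedralGroup.r i : DihedralGroup n) = (DihedralGroup.r 1) ^ i.val := by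
      rw [DihedralGroup.r_one_pow, ZMod.natCast_zmod_val]
    rw [this, map_pow, hk, DihedralGroup.r_pow, ZMod.natCast_zmod_val]
  · rw [hk, DihedralGroup.orderOf_sr] at h1
    omega

lemma dzAut_bijective (n : ℕ) (hn : 2 < n) : Function.Bijective (dzAut n) := by
  constructor
  · rintro ⟨k, t⟩ ⟨k', t'⟩ h
    have h1 : dz n k t (DihedralGroup.r 1) = dz n k' t' (DihedralGroup.r 1) :=
      DFunLike.congr_fun h (DihedralGroup.r 1)
    have h2 : dz n k t (DihedralGroup.sr 0) = dz n k' t' (DihedralGroup.sr 0) :=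
      DFunLike.congr_fun h (DihedralGroup.sr 0)
    simp [dz] at h1 h2
    exact Prod.ext (Units.ext h1) h2
  · intro a
    obtain ⟨k, hk⟩ := mulAut_r n hn a
    obtain ⟨k', hk'⟩ := mulAut_r n hn a⁻¹
    have e1 : k' * k = 1 := by
      have : a⁻¹ (a (DihedralGroup.r 1)) = DihedralGroup.r 1 := by simp
      rw [hk, hk'] at this
      simpa using this
    rcases hc : a (DihedralGroup.sr 0) with c | c
    · exfalso
      have : a⁻¹ (a (DihedralGroup.sr 0)) = DihedralGroup.sr 0 := by simp
      rw [hc, hk'] at this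
      simp at this
    · refine ⟨⟨⟨k, k', by rw [mul_comm]; exact e1, e1⟩, -c⟩, ?_⟩
      ext x
      rcases x with i | i
      · rw [hk]; rfl
      · have : (DihedralGroup.sr i : DihedralGroup n)
            = DihedralGroup.sr 0 * DihedralGroup.r i := by simp
        rw [this, map_mul a, hc, hk, ← this]
        change DihedralGroup.sr _ = _
        simp [add_comm]

/-- The action of automorphisms on connection sets. -/
@[reducible] def connAction (R : Type*) [Group R] :
    MulAction (MulAut R) {S : Set R // (1 : R) ∉ S} where
  smul a S := ⟨{x | a⁻¹ x ∈ S.1}, by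
    have := S.2
    simpa using this⟩
  one_smul S := by
    apply Subtype.ext
    ext x
    change (1 : MulAut R)⁻¹ x ∈ S.1 ↔ _
    simp
  mul_smul a b S := by
    apply Subtype.ext
    ext x
    change (a * b)⁻¹ x ∈ S.1 ↔ b⁻¹ (a⁻¹ x) ∈ S.1
    rw [mul_inv_rev]; rfl

/-- Invariant connection sets correspond to sets of cycles. -/
lemma card_fixed (n : ℕ) [NeZero n] (r t : ZMod n) (hr : IsUnit r) :
    Nat.card {S : {S : Set (DihedralGroup n) // (1 : DihedralGroup n) ∉ S} //
        ∀ x, x ∈ S.1 ↔ dz n r t x ∈ S.1}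
      = 2 ^ (cycleCount (dz n r 0) (Un n) + cycleCount (dz n r t) (Vn n)) := by
  classical
  have hU : ∀ a ∈ Un n, dz n r t a = dz n r 0 a := by
    rintro a ⟨⟨i, rfl⟩, -⟩; rfl
  let QU := Quot fun a b : Un n => dz n r 0 (a : DihedralGroup n) = (b : DihedralGroup n)
  let QV := Quot fun a b : Vn n => dz n r t (a : DihedralGroup n) = (b : DihedralGroup n)
  let e : {S : {S : Set (DihedralGroup n) // (1 : DihedralGroup n) ∉ S} //
        ∀ x, x ∈ S.1 ↔ dz n r t x ∈ S.1} ≃ (QU → Prop) × (QV → Prop) :=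
    { toFun := fun S =>
        (Quot.lift (fun x : Un n => (x : DihedralGroup n) ∈ S.1.1) (by
            intro a b hab
            apply propext
            rw [← hab, ← hU a a.2]
            exact S.2 a),
          Quot.lift (fun x : Vn n => (x : DihedralGroup n) ∈ S.1.1) (by
            intro a b hab
            apply propext
            rw [← hab]
            exact S.2 a))
      invFun := fun p => ⟨⟨{x | (∃ h : x ∈ Un n, p.1 (Quot.mk _ ⟨x, h⟩)) ∨
          (∃ h : x ∈ Vn n, p.2 (Quot.mk _ ⟨x, h⟩))}, by
            rintro (⟨h, -⟩ | ⟨⟨j, h⟩, -⟩)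
            · exact h.2 rfl
            · rw [DihedralGroup.one_def] at h
              cases h⟩, by
            rintro (i | j)
            · have hV : ∀ i, (DihedralGroup.r i : DihedralGroup n) ∉ Vn n := by
                rintro i ⟨j, h⟩; cases h
              by_cases hi : i = 0
              · subst hi
                simp [dz]
              · have h1 : (DihedralGroup.r i : DihedralGroup n) ∈ Un n :=
                  ⟨⟨i, rfl⟩, by rw [DihedralGroup.one_def]; exact fun h => hi (DihedralGroup.r.inj h)⟩
                have h2 : (DihedralGroup.r (r * i) : DihedralGroup n) ∈ Un n :=
                  ⟨⟨_, rfl⟩, by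
                    rw [DihedralGroup.one_def]
                    exact fun h => hi (hr.mul_right_eq_zero.1 (DihedralGroup.r.inj h))⟩
                have h3 : (Quot.mk _ ⟨_, h1⟩ : QU) = Quot.mk _ ⟨_, h2⟩ := Quot.sound rfl
                simp only [dz, Set.mem_ofPred_eq, hV, IsEmpty.exists_iff, or_false, h1, h2,
                  exists_true_left]
                change p.1 (Quot.mk _ ⟨_, h1⟩ : QU) ↔ p.1 (Quot.mk _ ⟨_, h2⟩ : QU)
                rw [h3]
            · have hN : ∀ i, (DihedralGroup.sr i : DihedralGroup n) ∉ Un n := by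
                rintro i ⟨⟨j, h⟩, -⟩; cases h
              have h1 : (DihedralGroup.sr j : DihedralGroup n) ∈ Vn n := ⟨_, rfl⟩
              have h2 : (DihedralGroup.sr (r * j - t) : DihedralGroup n) ∈ Vn n := ⟨_, rfl⟩
              have h3 : (Quot.mk _ ⟨_, h1⟩ : QV) = Quot.mk _ ⟨_, h2⟩ := Quot.sound rfl
              simp only [dz, Set.mem_ofPred_eq, hN, IsEmpty.exists_iff, false_or, h1, h2,
                exists_true_left]
              change p.2 (Quot.mk _ ⟨_, h1⟩ : QV) ↔ p.2 (Quot.mk _ ⟨_, h2⟩ : QV)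
              rw [h3]⟩
      left_inv := by
        intro S
        apply Subtype.ext
        apply Subtype.ext
        ext x
        change ((∃ h : x ∈ Un n, x ∈ S.1.1) ∨ (∃ h : x ∈ Vn n, x ∈ S.1.1)) ↔ x ∈ S.1.1
        constructor
        · rintro (⟨-, h⟩ | ⟨-, h⟩) <;> exact h
        · intro hx
          rcases x with i | j
          · left
            refine ⟨⟨⟨i, rfl⟩, ?_⟩, hx⟩
            intro h
            rw [h] at hx
            exact S.1.2 hx
          · right
            exact ⟨⟨j, rfl⟩, hx⟩
      right_inv := by
        rintro ⟨p, q⟩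
        apply Prod.ext
        · funext x
          induction x using Quot.ind with
          | mk x =>
            obtain ⟨x, hx⟩ := x
            apply propext
            change ((∃ h : x ∈ Un n, p (Quot.mk _ ⟨x, h⟩)) ∨
              (∃ h : x ∈ Vn n, q (Quot.mk _ ⟨x, h⟩))) ↔ p (Quot.mk _ ⟨x, hx⟩)
            constructor
            · rintro (⟨_, h⟩ | ⟨⟨j, h⟩, -⟩)
              · exact h
              · obtain ⟨⟨i, h'⟩, -⟩ := hx
                rw [h] at h'
                cases h'
            · exact fun h => Or.inl ⟨hx, h⟩
        · funext x
          induction x using Quot.ind with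
          | mk x =>
            obtain ⟨x, hx⟩ := x
            apply propext
            change ((∃ h : x ∈ Un n, p (Quot.mk _ ⟨x, h⟩)) ∨
              (∃ h : x ∈ Vn n, q (Quot.mk _ ⟨x, h⟩))) ↔ q (Quot.mk _ ⟨x, hx⟩)
            constructor
            · rintro (⟨⟨⟨i, h⟩, -⟩, -⟩ | ⟨_, h⟩)
              · obtain ⟨j, h'⟩ := hx
                rw [h] at h'
                cases h'
              · exact h
            · exact fun h => Or.inr ⟨hx, h⟩ }
  have : Finite QU := Quot.finite _
  have : Finite QV := Quot.finite _
  have := Fintype.ofFinite QU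
  have := Fintype.ofFinite QV
  rw [Nat.card_congr e, Nat.card_prod, pow_add]
  congr 1
  · rw [Nat.card_fun]
    simp [cycleCount, QU]
  · rw [Nat.card_fun]
    simp [cycleCount, QV]

/-- Conjugation by a unit. -/
lemma cycleCount_unit_mul (n : ℕ) (r t : ZMod n) (s : (ZMod n)ˣ) :
    cycleCount (dz n r (s * t)) (Vn n) = cycleCount (dz n r t) (Vn n) := by
  symm
  have hV : ∀ (k : ZMod n) (x : DihedralGroup n), x ∈ Vn n → dz n k 0 x ∈ Vn n := by
    rintro k _ ⟨j, rfl⟩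
    exact ⟨_, rfl⟩
  let e : Vn n ≃ Vn n :=
    { toFun := fun x => ⟨dz n s 0 x, hV _ _ x.2⟩
      invFun := fun x => ⟨dz n (s⁻¹ : (ZMod n)ˣ) 0 x, hV _ _ x.2⟩
      left_inv := by
        rintro ⟨_, j, rfl⟩
        simp [dz]
      right_inv := by
        rintro ⟨_, j, rfl⟩
        simp [dz] }
  apply Nat.card_congr
  refine Quot.congr e ?_
  rintro ⟨_, i, rfl⟩ ⟨_, j, rfl⟩
  simp only [e, Equiv.coe_fn_mk, dz, DihedralGroup.sr.injEq, sub_zero]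
  rw [show r * (s * i) - s * t = s * (r * i - t) by ring]
  exact (Units.mul_right_inj s).symm

lemma exists_unit_of_gcd (n : ℕ) [NeZero n] (t d : ℕ) (h : n.gcd t = d) :
    ∃ s : (ZMod n)ˣ, (t : ZMod n) = s * (d : ZMod n) := by
  obtain ⟨d', hd', u, hu, he⟩ := ZMod.eq_unit_mul_divisor (t : ZMod n)
  obtain ⟨u, rfl⟩ := hu
  have : d' = d := by
    rw [← h]
    apply Nat.dvd_antisymm
    · apply Nat.dvd_gcd hd'
      have h1 : (t : ZMod n) = ((((u : ZMod n).val * d' : ℕ)) : ZMod n) := by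
        rw [he]; push_cast; rw [ZMod.natCast_zmod_val]
      rw [ZMod.natCast_eq_natCast_iff] at h1
      exact ((h1.dvd_iff hd').2 (dvd_mul_left _ _))
    · have h1 : (d' : ZMod n) = (((((u⁻¹ : (ZMod n)ˣ) : ZMod n).val * t : ℕ)) : ZMod n) := by
        push_cast; rw [ZMod.natCast_zmod_val, he]; simp
      rw [ZMod.natCast_eq_natCast_iff] at h1
      exact ((h1.dvd_iff (Nat.gcd_dvd_left n t)).2 ((Nat.gcd_dvd_right n t).mul_left _))
  subst this
  exact ⟨u, he⟩

lemma sum_zmod_eq_sum_range (n : ℕ) [NeZero n] (G : ZMod n → ℚ) :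
    ∑ t : ZMod n, G t = ∑ t ∈ Finset.range n, G (t : ZMod n) := by
  refine Finset.sum_bij' (fun t _ => t.val) (fun t _ => (t : ZMod n)) ?_ ?_ ?_ ?_ ?_
  · intro a _; exact Finset.mem_range.2 (ZMod.val_lt a)
  · intro a _; exact Finset.mem_univ _
  · intro a _; exact ZMod.natCast_zmod_val a
  · intro a ha; exact ZMod.val_natCast_of_lt (Finset.mem_range.1 ha)
  · intro a _; simp

lemma sum_zmod_eq_sum_divisors (n : ℕ) [NeZero n] (G : ZMod n → ℚ)
    (hG : ∀ (s : (ZMod n)ˣ) t, G (s * t) = G t) :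
    ∑ t : ZMod n, G t = ∑ t ∈ Nat.divisors n, (Nat.totient (n / t) : ℚ) * G (t : ZMod n) := by
  rw [sum_zmod_eq_sum_range,
    ← Finset.sum_fiberwise_of_maps_to (s := Finset.range n) (t := Nat.divisors n)
      (g := fun t => n.gcd t)
      (fun t _ => Nat.mem_divisors.2 ⟨Nat.gcd_dvd_left n t, NeZero.ne n⟩)]
  apply Finset.sum_congr rfl
  intro d hd
  rw [Nat.totient_div_of_dvd (Nat.dvd_of_mem_divisors hd), ← nsmul_eq_mul, ← Finset.sum_const]
  apply Finset.sum_congr rfl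
  intro t ht
  obtain ⟨s, hs⟩ := exists_unit_of_gcd n t d (Finset.mem_filter.1 ht).2
  rw [hs, hG]

lemma sum_units_eq (n : ℕ) (hn : 2 < n) [NeZero n] (F : ZMod n → ℚ) :
    ∑ r : (ZMod n)ˣ, F (r : ZMod n)
      = ∑ r ∈ Finset.filter (fun r => Nat.gcd r n = 1) (Finset.Icc 1 (n - 1)),
          F (r : ZMod n) := by
  refine Finset.sum_bij (fun r _ => (r : ZMod n).val) ?_ ?_ ?_ ?_
  · intro r _
    have h1 : Nat.gcd (r : ZMod n).val n = 1 := ZMod.val_coe_unit_coprime r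
    have h2 := ZMod.val_lt (r : ZMod n)
    have h3 : (r : ZMod n).val ≠ 0 := by
      intro h
      rw [h, Nat.gcd_zero_left] at h1
      omega
    simp only [Finset.mem_filter, Finset.mem_Icc]
    exact ⟨⟨by omega, by omega⟩, h1⟩
  · intro a _ b _ h
    exact Units.ext (ZMod.val_injective n h)
  · intro b hb
    simp only [Finset.mem_filter, Finset.mem_Icc] at hb
    refine ⟨ZMod.unitOfCoprime b hb.2, Finset.mem_univ _, ?_⟩
    rw [ZMod.coe_unitOfCoprime]
    exact ZMod.val_natCast_of_lt (by omega)
  · intro a _; simp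

lemma card_quot_burnside (n : ℕ) (hn : 2 < n) [NeZero n]
    (h : IsDCI (DihedralGroup n)) :
    (Nat.card (Quot fun S T : {S : Set (DihedralGroup n) // (1 : DihedralGroup n) ∉ S} =>
        cayleyIso (S : Set (DihedralGroup n)) (T : Set (DihedralGroup n)))) * (n * Nat.totient n)
      = ∑ p : (ZMod n)ˣ × ZMod n,
        2 ^ (cycleCount (dz n p.1 0) (Un n) + cycleCount (dz n p.1 p.2) (Vn n)) := by
  classical
  let := connAction (DihedralGroup n)
  let E : (ZMod n)ˣ × ZMod n ≃ MulAut (DihedralGroup n) :=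
    Equiv.ofBijective _ (dzAut_bijective n hn)
  let : Fintype (MulAut (DihedralGroup n)) := Fintype.ofEquiv _ E
  let : ∀ g : MulAut (DihedralGroup n), Fintype (MulAction.fixedBy
    {S : Set (DihedralGroup n) // (1 : DihedralGroup n) ∉ S} g) := fun g => Fintype.ofFinite _
  let : Fintype (Quotient (MulAction.orbitRel (MulAut (DihedralGroup n))
    {S : Set (DihedralGroup n) // (1 : DihedralGroup n) ∉ S})) := Fintype.ofFinite _
  have hB := MulAction.sum_card_fixedBy_eq_card_orbits_mul_card_group
    (MulAut (DihedralGroup n)) {S : Set (DihedralGroup n) // (1 : DihedralGroup n) ∉ S}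
  have hc : Fintype.card (MulAut (DihedralGroup n)) = n * Nat.totient n := by
    rw [← Fintype.card_congr E, Fintype.card_prod, ZMod.card_units_eq_totient, ZMod.card, mul_comm]
  have hq : Nat.card (Quot fun S T : {S : Set (DihedralGroup n) // (1 : DihedralGroup n) ∉ S} =>
        cayleyIso (S : Set (DihedralGroup n)) (T : Set (DihedralGroup n)))
      = Fintype.card (Quotient (MulAction.orbitRel (MulAut (DihedralGroup n))
    {S : Set (DihedralGroup n) // (1 : DihedralGroup n) ∉ S})) := by
    rw [← Nat.card_eq_fintype_card]
    apply Nat.card_congr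
    refine Quot.congr (Equiv.refl _) ?_
    intro S T
    simp only [Equiv.refl_apply]
    change _ ↔ MulAction.orbitRel _ _ S T
    rw [MulAction.orbitRel_apply, MulAction.mem_orbit_iff]
    constructor
    · intro hST
      obtain ⟨a, ha⟩ := h S.1 T.1 S.2 T.2 hST
      refine ⟨a⁻¹, ?_⟩
      apply Subtype.ext
      ext x
      change a⁻¹⁻¹ x ∈ T.1 ↔ x ∈ S.1
      rw [inv_inv, ha]
      exact a.injective.mem_set_image
    · rintro ⟨a, rfl⟩
      refine ⟨(a⁻¹ : MulAut _).toEquiv, ?_⟩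
      intro x y
      change a⁻¹ (y * x⁻¹) ∈ T.1 ↔ a⁻¹ y * (a⁻¹ x)⁻¹ ∈ T.1
      rw [map_mul, map_inv]
  rw [hq, ← hc, ← hB, ← Equiv.sum_comp E]
  apply Finset.sum_congr rfl
  rintro ⟨k, t⟩ -
  rw [← card_fixed n k t k.isUnit, ← Nat.card_eq_fintype_card]
  apply Nat.card_congr
  refine Equiv.subtypeEquivRight ?_
  intro S
  rw [MulAction.mem_fixedBy]
  change _ ↔ ∀ x, x ∈ S.1 ↔ E (k, t) x ∈ S.1
  constructor
  · intro hS x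
    have h1 : E (k, t) x ∈ (E (k, t) • S).1 ↔ x ∈ S.1 := by
      change (E (k, t))⁻¹ (E (k, t) x) ∈ S.1 ↔ _
      simp
    rw [hS] at h1
    exact h1.symm
  · intro hS
    apply Subtype.ext
    ext x
    change (E (k, t))⁻¹ x ∈ S.1 ↔ _
    rw [hS]
    simp

/-- Assume `D_{2n}` is a DCI-group with `n > 2`. Then the number of
isomorphism classes of Cayley digraphs on `D_{2n}` equals
`(1/(n·φ(n))) · Σ_{t ∣ n} φ(n/t) · Σ_{1 ≤ r ≤ n-1, gcd(r,n)=1} 2^{c(U_n,a_{n,r,0}) + c(V_n,a_{n,r,t})}`. -/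
theorem card_cayleyClasses_dihedral_of_isDCI (n : ℕ) (hn : 2 < n)
    (h : IsDCI (DihedralGroup n)) :
    (Nat.card (Quot fun S T : {S : Set (DihedralGroup n) // (1 : DihedralGroup n) ∉ S} =>
        cayleyIso (S : Set (DihedralGroup n)) (T : Set (DihedralGroup n))) : ℚ)
      = (1 / ((n : ℚ) * (Nat.totient n : ℚ))) *
          ∑ t ∈ Nat.divisors n, (Nat.totient (n / t) : ℚ) *
            ∑ r ∈ Finset.filter (fun r => Nat.gcd r n = 1) (Finset.Icc 1 (n - 1)),
              (2 : ℚ) ^ (cycleCount (dihedralAut n (r : ℤ) 0) (Un n)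
                + cycleCount (dihedralAut n (r : ℤ) (t : ℤ)) (Vn n)) := by
  have : NeZero n := ⟨by omega⟩
  have hB := card_quot_burnside n hn h
  have hB' := congrArg (Nat.cast : ℕ → ℚ) hB
  push_cast at hB'
  have hne : (n : ℚ) * (Nat.totient n : ℚ) ≠ 0 := by
    have h1 : 0 < Nat.totient n := Nat.totient_pos.2 (by omega)
    have h2 : 0 < n := by omega
    positivity
  rw [Fintype.sum_prod_type_right, sum_zmod_eq_sum_divisors] at hB'
  · rw [one_div, eq_inv_mul_iff_mul_eq₀ hne, mul_comm, hB']
    apply Finset.sum_congr rfl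
    intro t _
    congr 1
    rw [sum_units_eq n hn (fun r => (2 : ℚ) ^ (cycleCount (dz n r 0) (Un n)
      + cycleCount (dz n r (t : ZMod n)) (Vn n)))]
    apply Finset.sum_congr rfl
    intro r _
    simp [dihedralAut_eq_dz]
  · intro s t
    apply Finset.sum_congr rfl
    intro r _
    rw [cycleCount_unit_mul]
end
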